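/- arXiv:2302.13532 — 2 statements merged into one kernel-verified Lean document; each statement's English description precedes it below -/
import Mathlib

section
/- Let N ≥ 1, M ≥ 2, and let c ⊆ {0,…,N−1}. The orthogonal complement, within W_c, of the span of ⋃_{c′ ⊊ c} W_{c′} is a subspace U_c of dimension (M−1)^{|c|}. Equivalently, M^{|c|} − Σ_{j=0}^{|c|−1} C(|c|,j)(M−1)^{j} = (M−1)^{|c|}, realised as the dimension of the interaction subspace U_c. -/
open scoped Classical

/-- `Wdep ι M s` is the subspace of tables `f : (ι → Fin M) → ℝ` that depend only on the
coordinates in `s`. -/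
noncomputable def Wdep (ι : Type*) [Fintype ι] (M : ℕ) (s : Finset ι) :
    Submodule ℝ (EuclideanSpace ℝ (ι → Fin M)) where
  carrier := {f | ∀ x y : ι → Fin M, (∀ j ∈ s, x j = y j) → f x = f y}
  add_mem' := by
    intro f g hf hg x y h
    simp [PiLp.add_apply, hf x y h, hg x y h]
  zero_mem' := by intro x y h; simp
  smul_mem' := by
    intro r f hf x y h
    simp [PiLp.smul_apply, hf x y h]

/-- `Udep ι M s` is the interaction subspace: the orthogonal complement, within `Wdep ι M s`,
of the span of the union of the `Wdep ι M t` over all proper subsets `t ⊊ s`. -/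
noncomputable def Udep (ι : Type*) [Fintype ι] (M : ℕ) (s : Finset ι) :
    Submodule ℝ (EuclideanSpace ℝ (ι → Fin M)) :=
  Wdep ι M s ⊓ (⨆ (t : Finset ι) (_ : t ⊂ s), Wdep ι M t)ᗮ

/-! Summing a table along coordinate `j` is a symmetric operator. It maps `W_s` into `W_{s \ {j}}`,
and multiplies by `M` the tables that do not depend on `j`. Hence `U_s` consists of the tables in
`W_s` whose sum along every `j ∈ s` vanishes. Fix a level `a₀`. Such a table is determined by its
values on the cells avoiding `a₀` at every coordinate in `s`, because the vanishing sums recover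
the other values one coordinate at a time. These `(M - 1) ^ |s|` values are arbitrary: products of
the contrasts `δ_b - δ_{a₀}`, `b ≠ a₀`, lie in `U_s` and restrict to the indicators of those
cells. -/

section LineSum

theorem sum_sum_update_comm {ι β : Type*} {α : ι → Type*} [Fintype ι] [DecidableEq ι]
    [∀ i, Fintype (α i)] [AddCommMonoid β] (j : ι) (F : (∀ i, α i) → (∀ i, α i) → β) :
    ∑ x, ∑ a, F (Function.update x j a) x = ∑ x, ∑ a, F x (Function.update x j a) := by
  simp only [← Fintype.sum_prod_type']
  -- `(x, a) ↦ (x[j := a], x j)` is an involution exchanging `x` and `x[j := a]`.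
  refine Finset.sum_nbij' (fun p ↦ (Function.update p.1 j p.2, p.1 j))
    (fun p ↦ (Function.update p.1 j p.2, p.1 j)) ?_ ?_ ?_ ?_ ?_ <;> simp

theorem eq_zero_of_sum_update_eq_zero {ι α β : Type*} [DecidableEq ι] [Fintype α]
    [AddCommMonoid β] {F : (ι → α) → β} {s : Finset ι} {a₀ : α}
    (hsum : ∀ j ∈ s, ∀ x, ∑ a, F (Function.update x j a) = 0)
    (havoid : ∀ x, (∀ j ∈ s, x j ≠ a₀) → F x = 0) (x : ι → α) : F x = 0 := by
  induction s using Finset.induction_on with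
  | empty => exact havoid x (by simp)
  | insert j s hj ih =>
    rw [Finset.forall_mem_insert] at hsum
    simp only [Finset.forall_mem_insert] at havoid
    refine ih hsum.2 fun y hy ↦ ?_
    obtain hyj | hyj := ne_or_eq (y j) a₀
    · exact havoid y ⟨hyj, hy⟩
    · have hother : ∀ a ≠ a₀, F (Function.update y j a) = 0 := fun a ha ↦
        havoid _ ⟨by simpa using ha, fun i hi ↦ by
          rw [Function.update_of_ne (ne_of_mem_of_not_mem hi hj)]
          exact hy i hi⟩
      calc F y = F (Function.update y j a₀) := by rw [← hyj, Function.update_eq_self]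
        _ = ∑ a, F (Function.update y j a) := (Fintype.sum_eq_single a₀ hother).symm
        _ = 0 := hsum.1 y

variable {ι α : Type*} [Fintype α]

/-- The operator summing a table along coordinate `j`. The result is again a table on all cells,
constant in the coordinate `j`, so that the operator can be iterated and compared with the inner
product. -/
noncomputable def lineSum (j : ι) :
    EuclideanSpace ℝ (ι → α) →ₗ[ℝ] EuclideanSpace ℝ (ι → α) where
  toFun f := WithLp.toLp 2 fun x ↦ ∑ a, f (Function.update x j a)
  map_add' f g := by ext x; simp [Finset.sum_add_distrib]
  map_smul' r f := by ext x; simp [Finset.mul_sum]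

theorem lineSum_apply (j : ι) (f : EuclideanSpace ℝ (ι → α)) (x : ι → α) :
    lineSum j f x = ∑ a, f (Function.update x j a) := rfl

theorem lineSum_isSymmetric [Fintype ι] (j : ι) : (lineSum (α := α) j).IsSymmetric := by
  intro f g
  simpa only [PiLp.inner_apply, lineSum_apply, sum_inner, inner_sum] using
    sum_sum_update_comm j fun x y ↦ inner ℝ (f x) (g y)

end LineSum

section ContrastProduct

variable {ι α : Type*} {s : Finset ι}

/-- The table `x ↦ ∏ j ∈ s, φ j (x j)`, the tensor product of the one-coordinate tables `φ j`
with the constant `1` in the coordinates off `s`. -/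
noncomputable def prodTable (φ : s → α → ℝ) : EuclideanSpace ℝ (ι → α) :=
  WithLp.toLp 2 fun x ↦ ∏ j, φ j (x j)

theorem prodTable_apply (φ : s → α → ℝ) (x : ι → α) :
    prodTable φ x = ∏ j, φ j (x j) := rfl

theorem lineSum_prodTable_eq_zero [Fintype α] {φ : s → α → ℝ} {j : s} (hφ : ∑ a, φ j a = 0) :
    lineSum (j : ι) (prodTable φ) = 0 := by
  ext x
  have hsplit (a : α) : prodTable φ (Function.update x j a) =
      φ j a * ∏ i ∈ Finset.univ.erase j, φ i (x i) := by
    rw [prodTable_apply, ← Finset.mul_prod_erase _ _ (Finset.mem_univ j), Function.update_self]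
    congr 1
    refine Finset.prod_congr rfl fun i hi ↦ ?_
    rw [Function.update_of_ne (Subtype.coe_ne_coe.2 (Finset.ne_of_mem_erase hi))]
  simp only [lineSum_apply, hsplit, ← Finset.sum_mul, hφ, zero_mul, PiLp.zero_apply]

/-- The cell with entries `z` on `s` and the level `a₀` off `s`. The filler off `s` is
arbitrary, since tables in `W_s` do not see it. -/
noncomputable def avoidingCell (a₀ : α) (z : s → {a : α // a ≠ a₀}) : ι → α :=
  Function.extend Subtype.val (fun j ↦ (z j : α)) fun _ ↦ a₀

theorem avoidingCell_apply (a₀ : α) (z : s → {a : α // a ≠ a₀}) (j : s) :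
    avoidingCell a₀ z j = z j :=
  Subtype.val_injective.extend_apply _ _ j

variable [DecidableEq α]

/-- The contrast `δ_b - δ_{a₀}` between the level `b` and the reference level `a₀`. -/
noncomputable def contrast (a₀ b : α) : α → ℝ :=
  Pi.single b 1 - Pi.single a₀ 1

theorem sum_contrast [Fintype α] (a₀ b : α) : ∑ a, contrast a₀ b a = 0 := by
  simp [contrast]

theorem prodTable_contrast_avoidingCell (a₀ : α) (y z : s → {a : α // a ≠ a₀}) :
    prodTable (fun j ↦ contrast a₀ (y j)) (avoidingCell a₀ z) = if y = z then 1 else 0 := by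
  have hfactor (j : s) : contrast a₀ (y j) (z j) = if y j = z j then 1 else 0 := by
    simp [contrast, Pi.single_apply, (z j).2, Subtype.ext_iff, eq_comm]
  simp only [prodTable_apply, avoidingCell_apply, hfactor, Fintype.prod_boole, funext_iff]

end ContrastProduct

section InteractionSubspace

variable {ι : Type*} [Fintype ι] {M : ℕ} {s t : Finset ι} {j : ι}

theorem lineSum_mem_Wdep_erase {f : EuclideanSpace ℝ (ι → Fin M)} (hf : f ∈ Wdep ι M s) :
    lineSum j f ∈ Wdep ι M (s.erase j) := by
  intro x y hxy
  simp only [lineSum_apply]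
  refine Finset.sum_congr rfl fun a _ ↦ hf _ _ fun i hi ↦ ?_
  obtain rfl | hij := eq_or_ne i j
  · simp
  · simp [hij, hxy i (Finset.mem_erase.2 ⟨hij, hi⟩)]

theorem lineSum_eq_smul_of_notMem {g : EuclideanSpace ℝ (ι → Fin M)} (hg : g ∈ Wdep ι M t)
    (hj : j ∉ t) : lineSum j g = (M : ℝ) • g := by
  ext x
  have hconst (a : Fin M) : g (Function.update x j a) = g x :=
    hg _ _ fun i hi ↦ Function.update_of_ne (ne_of_mem_of_not_mem hi hj) a x
  simp [lineSum_apply, hconst]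

theorem lineSum_eq_zero_of_mem_Udep {f : EuclideanSpace ℝ (ι → Fin M)} (hf : f ∈ Udep ι M s)
    (hj : j ∈ s) : lineSum j f = 0 := by
  obtain ⟨hfW, hf_orth⟩ := hf
  have hmem : lineSum j (lineSum j f) ∈ ⨆ (t : Finset ι) (_ : t ⊂ s), Wdep ι M t := by
    refine Submodule.mem_iSup_of_mem (s.erase j)
      (Submodule.mem_iSup_of_mem (Finset.erase_ssubset hj) ?_)
    simpa using lineSum_mem_Wdep_erase (j := j) (lineSum_mem_Wdep_erase (j := j) hfW)
  rw [← inner_self_eq_zero (𝕜 := ℝ), lineSum_isSymmetric]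
  exact Submodule.inner_left_of_mem_orthogonal hmem hf_orth

theorem inner_eq_zero_of_lineSum_eq_zero {f g : EuclideanSpace ℝ (ι → Fin M)} (hM : M ≠ 0)
    (hf : lineSum j f = 0) (hg : g ∈ Wdep ι M t) (hj : j ∉ t) : inner ℝ g f = 0 := by
  have h : (M : ℝ) * inner ℝ g f = 0 := by
    rw [← real_inner_smul_left, ← lineSum_eq_smul_of_notMem hg hj, lineSum_isSymmetric, hf,
      inner_zero_right]
  exact (mul_eq_zero.1 h).resolve_left (Nat.cast_ne_zero.2 hM)

theorem mem_Udep_iff (hM : M ≠ 0) {f : EuclideanSpace ℝ (ι → Fin M)} :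
    f ∈ Udep ι M s ↔ f ∈ Wdep ι M s ∧ ∀ j ∈ s, lineSum j f = 0 := by
  refine ⟨fun hf ↦ ⟨hf.1, fun j hj ↦ lineSum_eq_zero_of_mem_Udep hf hj⟩,
    fun ⟨hfW, hsum⟩ ↦ Submodule.mem_inf.2 ⟨hfW, ?_⟩⟩
  have hle : ⨆ (t : Finset ι) (_ : t ⊂ s), Wdep ι M t ≤ (ℝ ∙ f)ᗮ := by
    refine iSup₂_le fun t hts g hg ↦ Submodule.mem_orthogonal_singleton_iff_inner_left.2 ?_
    obtain ⟨j, hjs, hjt⟩ := Finset.exists_of_ssubset hts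
    exact inner_eq_zero_of_lineSum_eq_zero hM (hsum j hjs) hg hjt
  exact Submodule.le_orthogonal_iff_le_orthogonal.1 hle (Submodule.mem_span_singleton_self f)

theorem prodTable_mem_Wdep (φ : s → Fin M → ℝ) : prodTable φ ∈ Wdep ι M s :=
  fun _ _ hxy ↦ Finset.prod_congr rfl fun j _ ↦ congrArg (φ j) (hxy j j.2)

theorem prodTable_mem_Udep (hM : M ≠ 0) {φ : s → Fin M → ℝ} (hφ : ∀ j, ∑ a, φ j a = 0) :
    prodTable φ ∈ Udep ι M s :=
  (mem_Udep_iff hM).2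
    ⟨prodTable_mem_Wdep φ, fun j hj ↦ lineSum_prodTable_eq_zero (j := ⟨j, hj⟩) (hφ _)⟩

theorem eq_zero_of_forall_avoidingCell {a₀ : Fin M} {f : EuclideanSpace ℝ (ι → Fin M)}
    (hf : f ∈ Udep ι M s)
    (h : ∀ z : s → {a : Fin M // a ≠ a₀}, f (avoidingCell a₀ z) = 0) : f = 0 := by
  have hsum : ∀ j ∈ s, ∀ x, ∑ a, f (Function.update x j a) = 0 := fun j hj x ↦ by
    rw [← lineSum_apply, lineSum_eq_zero_of_mem_Udep hf hj, PiLp.zero_apply]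
  have havoid : ∀ x : ι → Fin M, (∀ j ∈ s, x j ≠ a₀) → f x = 0 := fun x hx ↦ by
    let z (j : s) : {a : Fin M // a ≠ a₀} := ⟨x j, hx j j.2⟩
    rw [← h z]
    exact hf.1 _ _ fun j hj ↦ (avoidingCell_apply a₀ z ⟨j, hj⟩).symm
  ext x
  exact eq_zero_of_sum_update_eq_zero hsum havoid x

variable (a₀ : Fin M)

variable (s) in
/-- Restriction of a table in `U_s` to the cells whose entries on `s` avoid `a₀`. Being bijective,
it identifies `U_s` with a space of functions on a set of size `(M - 1) ^ |s|`. -/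
noncomputable def restrictAvoiding :
    Udep ι M s →ₗ[ℝ] ((s → {a : Fin M // a ≠ a₀}) → ℝ) where
  toFun f z := f.1 (avoidingCell a₀ z)
  map_add' _ _ := rfl
  map_smul' _ _ := rfl

theorem restrictAvoiding_apply (f : Udep ι M s) (z : s → {a : Fin M // a ≠ a₀}) :
    restrictAvoiding s a₀ f z = f.1 (avoidingCell a₀ z) := rfl

theorem restrictAvoiding_injective : Function.Injective (restrictAvoiding s a₀) :=
  (injective_iff_map_eq_zero _).2 fun f hf ↦
    Subtype.ext (eq_zero_of_forall_avoidingCell f.2 (congrFun hf))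

theorem restrictAvoiding_surjective : Function.Surjective (restrictAvoiding s a₀) := by
  intro h
  let contrastTable (y : s → {a : Fin M // a ≠ a₀}) : Udep ι M s :=
    ⟨prodTable fun j ↦ contrast a₀ (y j), prodTable_mem_Udep a₀.pos.ne' fun _ ↦ sum_contrast _ _⟩
  refine ⟨∑ y, h y • contrastTable y, ?_⟩
  ext z
  simp [contrastTable, restrictAvoiding_apply, prodTable_contrast_avoidingCell]

variable (s) in
theorem finrank_Udep (hM : M ≠ 0) : Module.finrank ℝ (Udep ι M s) = (M - 1) ^ s.card := by
  let a₀ : Fin M := ⟨0, Nat.pos_of_ne_zero hM⟩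
  rw [(LinearEquiv.ofBijective (restrictAvoiding s a₀)
    ⟨restrictAvoiding_injective a₀, restrictAvoiding_surjective a₀⟩).finrank_eq]
  simp

end InteractionSubspace

theorem add_one_pow_sub_sum_choose_mul_pow (m n : ℕ) :
    (m + 1) ^ n - ∑ j ∈ Finset.range n, n.choose j * m ^ j = m ^ n := by
  have hbinom : (m + 1) ^ n = ∑ j ∈ Finset.range n, n.choose j * m ^ j + m ^ n := by
    simp [add_pow, Finset.sum_range_succ, mul_comm]
  rw [hbinom, Nat.add_sub_cancel_left]

theorem finrank_interaction_subspace_general {ι : Type*} [Fintype ι] {M : ℕ} (hM : M ≠ 0)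
    (s : Finset ι) :
    Module.finrank ℝ (Udep ι M s) = (M - 1) ^ s.card ∧
      M ^ s.card - ∑ j ∈ Finset.range s.card, s.card.choose j * (M - 1) ^ j =
        (M - 1) ^ s.card := by
  refine ⟨finrank_Udep s hM, ?_⟩
  simpa [Nat.sub_add_cancel (Nat.one_le_iff_ne_zero.2 hM)] using
    add_one_pow_sub_sum_choose_mul_pow (M - 1) s.card

/-- The interaction subspace `U_c` (the orthogonal complement within `W_c` of
the span of `⋃_{c' ⊊ c} W_{c'}`) has dimension `(M - 1) ^ |c|`; equivalently
`M ^ |c| - ∑_{j < |c|} C(|c|, j) * (M - 1) ^ j = (M - 1) ^ |c|`, realised as the dimension of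
`U_c`. -/
theorem finrank_interaction_subspace (N M : ℕ) (hN : 1 ≤ N) (hM : 2 ≤ M)
    (c : Finset (Fin N)) :
    Module.finrank ℝ (Udep (Fin N) M c) = (M - 1) ^ c.card ∧
      M ^ c.card - ∑ j ∈ Finset.range c.card, c.card.choose j * (M - 1) ^ j =
        (M - 1) ^ c.card :=
  finrank_interaction_subspace_general (by omega) c
end

section
/- Let A > 0 and define y(x) = log(A − e^x) on the interval (−∞, log A). Then the curvature κ(x) = |y″(x)| / (1 + y′(x)²)^{3/2} attains its global maximum value 2^{−1/2} uniquely at x = log(A/2); i.e., κ(x) ≤ 1/√2 for all x < log A, with equality if and only if x = log(A/2). -/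
/-!
The function `y x = log (A - exp x)` solves `y'' = y' (1 - y')`, so with `p = y'` its squared
curvature is `p² (1 - p)² / (1 + p²)³`. The inequalities `4 p² ≤ (1 + p²)²` and
`(1 - p)² ≤ 2 (1 + p²)` multiply to the bound `1 / 2`. Their defects `(1 - p²)²` and `(1 + p)²`
share the factor `(1 + p)²`, which therefore splits off from `(1 + p²)³ - 2 p² (1 - p)²`; the
cofactor is positive, so equality holds exactly at `p = -1`, which for this `y` means
`exp x = A / 2`.
-/

/-- The curvature of the graph of `y : ℝ → ℝ` at the point `(x, y x)`, meaningful where `y` is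
twice differentiable. -/
noncomputable def graphCurvature (y : ℝ → ℝ) (x : ℝ) : ℝ :=
  |iteratedDeriv 2 y x| / (1 + (deriv y x) ^ 2) ^ ((3 : ℝ) / 2)

theorem graphCurvature_eq_sqrt (y : ℝ → ℝ) (x : ℝ) :
    graphCurvature y x = √((iteratedDeriv 2 y x) ^ 2 / (1 + (deriv y x) ^ 2) ^ 3) := by
  have hpow : (1 + (deriv y x) ^ 2) ^ ((3 : ℝ) / 2) = √((1 + (deriv y x) ^ 2) ^ 3) := by
    rw [Real.sqrt_eq_rpow, ← Real.rpow_natCast_mul (by positivity)]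
    norm_num
  rw [graphCurvature, hpow, Real.sqrt_div (sq_nonneg _), Real.sqrt_sq_eq_abs]

theorem two_rpow_neg_half_eq_sqrt : (2 : ℝ) ^ (-(1 : ℝ) / 2) = √(1 / 2) := by
  rw [neg_div, Real.rpow_neg zero_le_two, ← Real.sqrt_eq_rpow, one_div, Real.sqrt_inv]

theorem one_add_sq_pow_three_sub_eq (p : ℝ) :
    (1 + p ^ 2) ^ 3 - 2 * (p * (1 - p)) ^ 2 =
      (p + 1) ^ 2 * ((1 - p) ^ 2 * (1 + p ^ 2) + 2 * p ^ 2) := by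
  ring

theorem sq_mul_one_sub_div_le_half (p : ℝ) :
    (p * (1 - p)) ^ 2 / (1 + p ^ 2) ^ 3 ≤ 1 / 2 := by
  have hdefect : 0 ≤ (p + 1) ^ 2 * ((1 - p) ^ 2 * (1 + p ^ 2) + 2 * p ^ 2) := by positivity
  rw [div_le_div_iff₀ (by positivity) two_pos]
  linarith [one_add_sq_pow_three_sub_eq p]

theorem sq_mul_one_sub_div_eq_half_iff {p : ℝ} :
    (p * (1 - p)) ^ 2 / (1 + p ^ 2) ^ 3 = 1 / 2 ↔ p = -1 := by
  have hcofactor : (1 - p) ^ 2 * (1 + p ^ 2) + 2 * p ^ 2 ≠ 0 := by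
    rcases eq_or_ne p 0 with rfl | hp
    · norm_num
    · positivity
  calc (p * (1 - p)) ^ 2 / (1 + p ^ 2) ^ 3 = 1 / 2
      ↔ (1 + p ^ 2) ^ 3 - 2 * (p * (1 - p)) ^ 2 = 0 := by
        rw [div_eq_div_iff (by positivity) two_ne_zero, sub_eq_zero, one_mul, mul_comm, eq_comm]
    _ ↔ p = -1 := by
        rw [one_add_sq_pow_three_sub_eq, mul_eq_zero_iff_right hcofactor, sq_eq_zero_iff,
          add_eq_zero_iff_eq_neg]

section LogisticEquation

variable {y : ℝ → ℝ} {x : ℝ}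

theorem graphCurvature_le_of_iteratedDeriv_two_eq
    (hy : iteratedDeriv 2 y x = deriv y x * (1 - deriv y x)) :
    graphCurvature y x ≤ (2 : ℝ) ^ (-(1 : ℝ) / 2) := by
  rw [graphCurvature_eq_sqrt, two_rpow_neg_half_eq_sqrt, hy]
  exact Real.sqrt_le_sqrt (sq_mul_one_sub_div_le_half _)

theorem graphCurvature_eq_iff_of_iteratedDeriv_two_eq
    (hy : iteratedDeriv 2 y x = deriv y x * (1 - deriv y x)) :
    graphCurvature y x = (2 : ℝ) ^ (-(1 : ℝ) / 2) ↔ deriv y x = -1 := by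
  rw [graphCurvature_eq_sqrt, two_rpow_neg_half_eq_sqrt, hy,
    Real.sqrt_inj (by positivity) (by positivity), sq_mul_one_sub_div_eq_half_iff]

end LogisticEquation

section LogSubExp

variable {A x : ℝ}

theorem deriv_log_sub_exp (hx : Real.exp x ≠ A) :
    deriv (fun z => Real.log (A - Real.exp z)) x = -Real.exp x / (A - Real.exp x) :=
  (((Real.hasDerivAt_exp x).const_sub A).log (sub_ne_zero.2 hx.symm)).deriv

theorem iteratedDeriv_two_log_sub_exp (hx : Real.exp x ≠ A) :
    iteratedDeriv 2 (fun z => Real.log (A - Real.exp z)) x =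
      deriv (fun z => Real.log (A - Real.exp z)) x *
        (1 - deriv (fun z => Real.log (A - Real.exp z)) x) := by
  have hne : A - Real.exp x ≠ 0 := sub_ne_zero.2 hx.symm
  have hderiv : deriv (fun z => Real.log (A - Real.exp z)) =ᶠ[nhds x]
      fun z => -Real.exp z / (A - Real.exp z) :=
    (Real.continuous_exp.continuousAt.eventually_ne hx).mono fun _ => deriv_log_sub_exp
  have hquot := (Real.hasDerivAt_exp x).fun_neg.fun_div ((Real.hasDerivAt_exp x).const_sub A) hne
  rw [iteratedDeriv_succ, iteratedDeriv_one, hderiv.deriv_eq, hquot.deriv, deriv_log_sub_exp hx]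
  field_simp
  ring

theorem deriv_log_sub_exp_eq_neg_one_iff (hA : 0 < A) (hx : Real.exp x ≠ A) :
    deriv (fun z => Real.log (A - Real.exp z)) x = -1 ↔ x = Real.log (A / 2) := by
  have hlog : x = Real.log (A / 2) ↔ Real.exp x = A / 2 := by
    rw [← Real.exp_eq_exp, Real.exp_log (half_pos hA)]
  rw [deriv_log_sub_exp hx, neg_div, neg_inj, div_eq_one_iff_eq (sub_ne_zero.2 hx.symm),
    eq_sub_iff_add_eq, ← mul_two, ← eq_div_iff two_ne_zero, hlog]

end LogSubExp

/-- For `A > 0` and `y x = log (A - exp x)` on `(-∞, log A)`, the curvature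
`κ x = |y'' x| / (1 + (y' x)^2)^(3/2)` attains its global maximum value `2^(-1/2)` uniquely at
`x = log (A / 2)`: for all `x < log A`, `κ x ≤ 1 / √2`, with equality iff `x = log (A / 2)`. -/
theorem curvature_max (A : ℝ) (hA : 0 < A) :
    letI y : ℝ → ℝ := fun x => Real.log (A - Real.exp x)
    letI κ : ℝ → ℝ := fun x =>
      |iteratedDeriv 2 y x| / (1 + (deriv y x) ^ 2) ^ ((3 : ℝ) / 2)
    ∀ x : ℝ, x < Real.log A →
      κ x ≤ (2 : ℝ) ^ (-(1 : ℝ) / 2) ∧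
        (κ x = (2 : ℝ) ^ (-(1 : ℝ) / 2) ↔ x = Real.log (A / 2)) := by
  intro x hx
  have hne : Real.exp x ≠ A := ((Real.lt_log_iff_exp_lt hA).1 hx).ne
  have hode := iteratedDeriv_two_log_sub_exp hne
  exact ⟨graphCurvature_le_of_iteratedDeriv_two_eq hode,
    (graphCurvature_eq_iff_of_iteratedDeriv_two_eq hode).trans
      (deriv_log_sub_exp_eq_neg_one_iff hA hne)⟩
end
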